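/- Let p > 3 and h ∈ (1, p−2). For every c > 0 there exists L₀ ≥ 1 such that for all L ≥ L₀ and all m ≥ 0: ∫_{m+1}^{∞} ∫_{−β}^{m} (L + β − α)^{1−p} ⟨α⟩^{−h} dα dβ ≤ c ⟨m⟩^{−h}; in particular the double integral converges. -/

import Mathlib

open MeasureTheory intervalIntegral

/-- The Japanese bracket `⟨x⟩ = (1 + x²)^{1/2}`. -/
noncomputable def jap (x : ℝ) : ℝ := Real.sqrt (1 + x ^ 2)

theorem one_le_jap (x : ℝ) : 1 ≤ jap x :=
  Real.one_le_sqrt.2 (by nlinarith [sq_nonneg x])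

theorem jap_pos (x : ℝ) : 0 < jap x := zero_lt_one.trans_le (one_le_jap x)

theorem abs_le_jap (x : ℝ) : |x| ≤ jap x :=
  Real.abs_le_sqrt (by linarith)

theorem continuous_jap : Continuous jap := by
  unfold jap
  fun_prop

theorem jap_le_one_add {x : ℝ} (hx : 0 ≤ x) : jap x ≤ 1 + x :=
  Real.sqrt_le_iff.2 ⟨by linarith, by nlinarith⟩

theorem jap_le_add (x y : ℝ) : jap x ≤ jap (x - y) + jap y := by
  have hx := abs_le_jap (x - y)
  have hy := abs_le_jap y
  have hxy : (x - y) * y ≤ jap (x - y) * jap y := by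
    refine (le_abs_self _).trans ?_
    rw [abs_mul]
    exact mul_le_mul hx hy (abs_nonneg _) (jap_pos _).le
  have h1 : jap (x - y) ^ 2 = 1 + (x - y) ^ 2 := Real.sq_sqrt (by positivity)
  have h2 : jap y ^ 2 = 1 + y ^ 2 := Real.sq_sqrt (by positivity)
  exact Real.sqrt_le_iff.2
    ⟨by linarith [jap_pos (x - y), jap_pos y], by nlinarith⟩

theorem jap_rpow_mul_jap_rpow_le {h : ℝ} (hh : 0 ≤ h) (x y : ℝ) :
    jap (x - y) ^ (-h) * jap y ^ (-h) ≤
      2 ^ h * jap x ^ (-h) * (jap (x - y) ^ (-h) + jap y ^ (-h)) := by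
  have half_le : ∀ z, jap x ≤ 2 * z → z ^ (-h) ≤ 2 ^ h * jap x ^ (-h) := by
    intro z hz
    have hx := jap_pos x
    calc z ^ (-h) ≤ (jap x / 2) ^ (-h) :=
          Real.rpow_le_rpow_of_nonpos (by linarith) (by linarith) (by linarith)
      _ = 2 ^ h * jap x ^ (-h) := by
          rw [Real.div_rpow hx.le zero_le_two, Real.rpow_neg zero_le_two, div_inv_eq_mul, mul_comm]
  have ha := Real.rpow_nonneg (jap_pos (x - y)).le (-h)
  have hb := Real.rpow_nonneg (jap_pos y).le (-h)
  have hC : 0 ≤ 2 ^ h * jap x ^ (-h) :=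
    mul_nonneg (by positivity) (Real.rpow_nonneg (jap_pos x).le _)
  have hadd := jap_le_add x y
  rcases le_total (jap (x - y)) (jap y) with hle | hle
  · nlinarith [mul_le_mul_of_nonneg_left (half_le (jap y) (by linarith)) ha, mul_nonneg hC hb]
  · nlinarith [mul_le_mul_of_nonneg_right (half_le (jap (x - y)) (by linarith)) hb,
      mul_nonneg hC ha]

theorem integrable_jap_rpow {h : ℝ} (hh : 1 < h) : Integrable fun x => jap x ^ (-h) := by
  have := integrable_rpow_neg_one_add_norm_sq (E := ℝ) (μ := volume) (r := h) (by simpa using hh)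
  refine this.congr (Filter.Eventually.of_forall fun x => ?_)
  simp only [jap, Real.norm_eq_abs, sq_abs, Real.sqrt_eq_rpow]
  rw [← Real.rpow_mul (by positivity)]
  ring_nf

/-- Pointwise bound of the integrand, with the two variables `α`, `β` separated. -/
theorem rpow_mul_jap_rpow_le {p h L m α β : ℝ} (hh1 : 0 ≤ h) (hh2 : h < p - 2)
    (hL : 1 ≤ L) (hβ : m ≤ β) (hα : α ≤ m) :
    (L + β - α) ^ (1 - p) * jap α ^ (-h) ≤
      (2 ^ h * jap m ^ (-h)) * (L + β - m) ^ (1 - p + h) *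
        (jap (m - α) ^ (-h) + jap α ^ (-h)) := by
  have hpos : 0 < L + β - α := by linarith
  have hjap : jap (m - α) ≤ L + β - α :=
    (jap_le_one_add (by linarith)).trans (by linarith)
  have hsplit : (L + β - α) ^ (1 - p) = (L + β - α) ^ (1 - p + h) * (L + β - α) ^ (-h) := by
    rw [← Real.rpow_add hpos]
    ring_nf
  have hD : (L + β - α) ^ (1 - p + h) ≤ (L + β - m) ^ (1 - p + h) :=
    Real.rpow_le_rpow_of_nonpos (by linarith) (by linarith) (by linarith)
  have hJ : (L + β - α) ^ (-h) ≤ jap (m - α) ^ (-h) :=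
    Real.rpow_le_rpow_of_nonpos (jap_pos _) hjap (by linarith)
  have hD0 : 0 ≤ (L + β - m) ^ (1 - p + h) := Real.rpow_nonneg (by linarith) _
  calc (L + β - α) ^ (1 - p) * jap α ^ (-h)
      ≤ (L + β - m) ^ (1 - p + h) * jap (m - α) ^ (-h) * jap α ^ (-h) := by
        rw [hsplit]
        exact mul_le_mul_of_nonneg_right
          (mul_le_mul hD hJ (Real.rpow_nonneg hpos.le _) hD0) (Real.rpow_nonneg (jap_pos _).le _)
    _ = (L + β - m) ^ (1 - p + h) * (jap (m - α) ^ (-h) * jap α ^ (-h)) := mul_assoc _ _ _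
    _ ≤ (L + β - m) ^ (1 - p + h) *
          (2 ^ h * jap m ^ (-h) * (jap (m - α) ^ (-h) + jap α ^ (-h))) :=
        mul_le_mul_of_nonneg_left (jap_rpow_mul_jap_rpow_le hh1 m α) hD0
    _ = _ := by ring

theorem continuous_max_rpow_mul_jap_rpow (p h L : ℝ) :
    Continuous fun q : ℝ × ℝ => (max 1 (L + q.1 - q.2)) ^ (1 - p) * jap q.2 ^ (-h) := by
  refine Continuous.mul (Continuous.rpow_const (by fun_prop) fun q => Or.inl ?_)
    ((continuous_jap.comp continuous_snd).rpow_const fun q => Or.inl (jap_pos _).ne')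
  exact (zero_lt_one.trans_le (le_max_left _ _)).ne'

theorem integral_eq_integral_max {p h L m β : ℝ} (hL : 1 ≤ L) (hm : 0 ≤ m) (hβ : m ≤ β) :
    ∫ α in (-β)..m, (L + β - α) ^ (1 - p) * jap α ^ (-h) =
      -∫ α in m..(-β), (max 1 (L + β - α)) ^ (1 - p) * jap α ^ (-h) := by
  rw [← integral_symm]
  refine integral_congr fun α hα => ?_
  rw [Set.uIcc_of_le (by linarith)] at hα
  rw [max_eq_right (by linarith [hα.2])]

theorem integral_rpow_mul_jap_rpow_le {p h L m β : ℝ} (hh1 : 1 < h) (hh2 : h < p - 2)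
    (hL : 1 ≤ L) (hm : 0 ≤ m) (hβ : m ≤ β) :
    ∫ α in (-β)..m, (L + β - α) ^ (1 - p) * jap α ^ (-h) ≤
      (2 ^ h * jap m ^ (-h)) * (2 * ∫ x, jap x ^ (-h)) * (L + β - m) ^ (1 - p + h) := by
  have hint := integrable_jap_rpow hh1
  have hint' : Integrable fun α => jap (m - α) ^ (-h) := hint.comp_sub_left m
  have hsum : Integrable fun α => jap (m - α) ^ (-h) + jap α ^ (-h) := hint'.add hint
  have hA : 0 ≤ (2 ^ h * jap m ^ (-h)) * (L + β - m) ^ (1 - p + h) :=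
    mul_nonneg (mul_nonneg (by positivity) (Real.rpow_nonneg (jap_pos _).le _))
      (Real.rpow_nonneg (by linarith) _)
  have hle : -β ≤ m := by linarith
  have hII : IntervalIntegrable (fun α => (L + β - α) ^ (1 - p) * jap α ^ (-h)) volume (-β) m := by
    refine (((continuous_max_rpow_mul_jap_rpow p h L).comp
      (Continuous.prodMk_right β)).intervalIntegrable (-β) m).congr fun α hα => ?_
    rw [Set.uIoc_of_le hle] at hα
    simp only [Function.comp]
    rw [max_eq_right (by linarith [hα.2])]
  calc ∫ α in (-β)..m, (L + β - α) ^ (1 - p) * jap α ^ (-h)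
      ≤ ∫ α in (-β)..m, (2 ^ h * jap m ^ (-h)) * (L + β - m) ^ (1 - p + h) *
          (jap (m - α) ^ (-h) + jap α ^ (-h)) :=
        integral_mono_on hle hII (hsum.const_mul _).intervalIntegrable fun α hα =>
          rpow_mul_jap_rpow_le (by linarith) hh2 hL hβ hα.2
    _ = (2 ^ h * jap m ^ (-h)) * (L + β - m) ^ (1 - p + h) *
          ∫ α in Set.Ioc (-β) m, (jap (m - α) ^ (-h) + jap α ^ (-h)) := by
        rw [intervalIntegral.integral_const_mul, integral_of_le hle]
    _ ≤ (2 ^ h * jap m ^ (-h)) * (L + β - m) ^ (1 - p + h) *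
          ∫ α, (jap (m - α) ^ (-h) + jap α ^ (-h)) :=
        mul_le_mul_of_nonneg_left (setIntegral_le_integral hsum
          (Filter.Eventually.of_forall fun α => add_nonneg
            (Real.rpow_nonneg (jap_pos _).le _) (Real.rpow_nonneg (jap_pos _).le _))) hA
    _ = _ := by
        rw [integral_add hint' hint, integral_sub_left_eq_self (fun x => jap x ^ (-h)) volume m]
        ring

theorem interior_region_estimate_four (p h : ℝ) (hp : 3 < p) (hh1 : 1 < h) (hh2 : h < p - 2) :
    ∀ c : ℝ, 0 < c → ∃ L₀ : ℝ, 1 ≤ L₀ ∧ ∀ L : ℝ, L₀ ≤ L → ∀ m : ℝ, 0 ≤ m →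
      IntegrableOn
        (fun β => ∫ α in (-β)..m, (L + β - α) ^ (1 - p) * jap α ^ (-h))
        (Set.Ioi (m + 1)) ∧
      (∫ β in Set.Ioi (m + 1), ∫ α in (-β)..m, (L + β - α) ^ (1 - p) * jap α ^ (-h))
        ≤ c * jap m ^ (-h) := by
  intro c hc
  set J : ℝ := ∫ x, jap x ^ (-h)
  -- The bound obtained for the double integral tends to `0` as `L → ∞`.
  have hlim : Filter.Tendsto
      (fun L : ℝ => 2 ^ h * (2 * J) * ((L + 1) ^ (-(p - 2 - h)) / (p - 2 - h)))
      Filter.atTop (nhds 0) := by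
    have := ((tendsto_rpow_neg_atTop (y := p - 2 - h) (by linarith)).comp
      (Filter.tendsto_atTop_add_const_right _ (1 : ℝ) Filter.tendsto_id)).div_const (p - 2 - h)
    simpa using this.const_mul (2 ^ h * (2 * J))
  obtain ⟨L₁, hL₁⟩ := Filter.eventually_atTop.1 (hlim.eventually_lt_const hc)
  refine ⟨max 1 L₁, le_max_left _ _, fun L hL m hm => ?_⟩
  have hL1 : 1 ≤ L := (le_max_left _ _).trans hL
  have hsmall := hL₁ L ((le_max_right _ _).trans hL)
  have hexp : 1 - p + h < -1 := by linarith
  have hdom : IntegrableOn (fun β : ℝ => (2 ^ h * jap m ^ (-h)) * (2 * J) *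
      (L + β - m) ^ (1 - p + h)) (Set.Ioi (m + 1)) := by
    refine Integrable.const_mul ?_ _
    have := integrableOn_add_rpow_Ioi_of_lt (m := L - m) (c := m + 1) hexp (by linarith)
    refine this.congr_fun (fun β _ => ?_) measurableSet_Ioi
    simp only
    congr 1
    ring
  have hval : ∫ β in Set.Ioi (m + 1), (L + β - m) ^ (1 - p + h) =
      (L + 1) ^ (-(p - 2 - h)) / (p - 2 - h) := by
    have hshift := (measurePreserving_add_right volume (L - m)).setIntegral_preimage_emb
      (measurableEmbedding_addRight (L - m)) (fun x : ℝ => x ^ (1 - p + h)) (Set.Ioi (L + 1))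
    rw [Set.preimage_add_const_Ioi, show L + 1 - (L - m) = m + 1 by ring] at hshift
    have heq : ∀ β : ℝ, L + β - m = β + (L - m) := fun β => by ring
    simp_rw [heq]
    rw [hshift, integral_Ioi_rpow_of_lt hexp (by linarith), neg_div, ← div_neg]
    ring_nf
  have hmeas : AEStronglyMeasurable
      (fun β => ∫ α in (-β)..m, (L + β - α) ^ (1 - p) * jap α ^ (-h))
      (volume.restrict (Set.Ioi (m + 1))) := by
    have hcont : Continuous fun β : ℝ =>
        -∫ α in m..(-β), (max 1 (L + β - α)) ^ (1 - p) * jap α ^ (-h) :=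
      (continuous_parametric_intervalIntegral_of_continuous
        (f := fun β α => (max 1 (L + β - α)) ^ (1 - p) * jap α ^ (-h))
        (continuous_max_rpow_mul_jap_rpow p h L) continuous_neg).neg
    refine hcont.aestronglyMeasurable.congr ?_
    filter_upwards [ae_restrict_mem measurableSet_Ioi] with β hβ
    rw [Set.mem_Ioi] at hβ
    exact (integral_eq_integral_max hL1 hm (by linarith)).symm
  have hbound : ∀ β ∈ Set.Ioi (m + 1),
      ∫ α in (-β)..m, (L + β - α) ^ (1 - p) * jap α ^ (-h) ≤
        (2 ^ h * jap m ^ (-h)) * (2 * J) * (L + β - m) ^ (1 - p + h) := fun β hβ =>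
    integral_rpow_mul_jap_rpow_le hh1 hh2 hL1 hm (by rw [Set.mem_Ioi] at hβ; linarith)
  have hint : IntegrableOn
      (fun β => ∫ α in (-β)..m, (L + β - α) ^ (1 - p) * jap α ^ (-h)) (Set.Ioi (m + 1)) := by
    refine Integrable.mono' hdom hmeas ?_
    filter_upwards [ae_restrict_mem measurableSet_Ioi] with β hβ
    have hβ' : m + 1 < β := hβ
    rw [Real.norm_of_nonneg]
    · exact hbound β hβ
    · exact integral_nonneg (by linarith) fun α hα =>
        mul_nonneg (Real.rpow_nonneg (by linarith [hα.2]) _) (Real.rpow_nonneg (jap_pos _).le _)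
  refine ⟨hint, (setIntegral_mono_on hint hdom measurableSet_Ioi hbound).trans ?_⟩
  rw [MeasureTheory.integral_const_mul, hval]
  calc _ = 2 ^ h * (2 * J) * ((L + 1) ^ (-(p - 2 - h)) / (p - 2 - h)) * jap m ^ (-h) := by ring
    _ ≤ _ := mul_le_mul_of_nonneg_right hsmall.le (Real.rpow_nonneg (jap_pos _).le _)
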